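/- arXiv:2412.13573 — 2 statements merged into one kernel-verified Lean document; each statement's English description precedes it below -/
import Mathlib

section
/- Let q* be the unique minimizer of (P) (all of whose coordinates are strictly positive). Then there exist unique reals λ and μ_2, …, μ_N with μ_j ≥ 0 for all j, satisfying the stationarity conditions q*_1 = p_1·exp(∑_{k=2}^N μ_k − 1 − λ) and q*_j = p_j·exp(−α·μ_j − 1 − λ) for j = 2, …, N, together with the complementary slackness conditions μ_j·(α·q*_j − q*_1) = 0 for j = 2, …, N. -/
/-!
At a minimizer `q` with positive coordinates, the gradient `g i = log (q i / p i) + 1` of the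
divergence satisfies `g ⬝ᵥ q ≤ g ⬝ᵥ r` for every feasible `r`, because the feasible set is convex.
The stationarity conditions are linear in `(λ, μ)`, and pairing them with the probability vector `u`
at which all the constraints `α * r j ≤ r 0` are equalities forces `λ = -(g ⬝ᵥ u)`; so they have
exactly one solution. Moving mass from a coordinate `j` of `q` to `u` stays feasible, which gives
`μ j ≥ 0`. Finally, stationarity turns `g ⬝ᵥ q ≤ g ⬝ᵥ u` into `∑ j, μ j * (q 0 - α * q j) ≤ 0`, and
a sum of nonnegative terms can only be so if each term vanishes.
-/

/-- The feasible set `C₁`: probability vectors `q` with `q 0 ≥ α * q k` for all `k ≠ 0`.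
(Index `0` plays the role of the index `1` of the paper.) -/
def C1 (N : ℕ) [NeZero N] (α : ℝ) : Set (Fin N → ℝ) :=
  {q | (∀ i, 0 ≤ q i) ∧ (∑ i, q i = 1) ∧ ∀ k, k ≠ 0 → α * q k ≤ q 0}

/-- `KL(q‖p) = ∑ i, q i * log (q i / p i)`, with the convention `0 * log 0 = 0`
(automatic here since `Real.log 0 = 0`). -/
noncomputable def KLv {N : ℕ} (q p : Fin N → ℝ) : ℝ :=
  ∑ i, q i * Real.log (q i / p i)

open scoped Matrix

section Stationarity

variable {ι : Type*} [DecidableEq ι] {o : ι} {α : ℝ}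

/-- The unnormalized form of `tiedPoint`: weight `α` at `o` and weight `1` elsewhere. -/
def tiedWeight (o : ι) (α : ℝ) : ι → ℝ :=
  Function.update 1 o α

lemma tiedWeight_pos (hα : 0 < α) (i : ι) : 0 < tiedWeight o α i := by
  rcases eq_or_ne i o with rfl | hi
  · simpa [tiedWeight] using hα
  · simp [tiedWeight, hi]

variable [Fintype ι]

/-- The probability vector at which the coordinate `o` is exactly `α` times every other
coordinate, that is, at which all the dominance constraints are active. -/
noncomputable def tiedPoint (o : ι) (α : ℝ) (i : ι) : ℝ :=
  tiedWeight o α i / ∑ k, tiedWeight o α k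

/-- Stationarity of the Lagrangian
`g ⬝ᵥ r + lm.1 * (∑ i, r i - 1) + ∑ j, lm.2 j * (α * r j - r o)` in `r`. For a nonlinear objective,
`g` is its gradient at the point under consideration. -/
def IsLagrangeStationary (o : ι) (α : ℝ) (g : ι → ℝ) (lm : ℝ × ({j : ι // j ≠ o} → ℝ)) : Prop :=
  g o = ∑ k, lm.2 k - lm.1 ∧ ∀ j : {j : ι // j ≠ o}, g j = -(α * lm.2 j) - lm.1

/-- The Lagrange multipliers of the objective with gradient `g`, obtained by solving the
stationarity conditions. -/
noncomputable def multipliers (o : ι) (α : ℝ) (g : ι → ℝ) : ℝ × ({j : ι // j ≠ o} → ℝ) :=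
  (-(g ⬝ᵥ tiedPoint o α), fun j => (g ⬝ᵥ tiedPoint o α - g j) / α)

lemma sum_tiedWeight_pos (hα : 0 < α) : 0 < ∑ i, tiedWeight o α i :=
  Finset.sum_pos (fun i _ => tiedWeight_pos hα i) ⟨o, Finset.mem_univ o⟩

lemma tiedPoint_pos (hα : 0 < α) (i : ι) : 0 < tiedPoint o α i :=
  div_pos (tiedWeight_pos hα i) (sum_tiedWeight_pos hα)

lemma sum_tiedPoint (hα : 0 < α) : ∑ i, tiedPoint o α i = 1 := by
  simp only [tiedPoint]
  rw [← Finset.sum_div, div_self (sum_tiedWeight_pos hα).ne']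

lemma mul_tiedPoint {j : ι} (hj : j ≠ o) : α * tiedPoint o α j = tiedPoint o α o := by
  simp [tiedPoint, tiedWeight, hj, div_eq_mul_inv]

lemma IsLagrangeStationary.dotProduct_eq {g : ι → ℝ} {lm : ℝ × ({j : ι // j ≠ o} → ℝ)}
    (h : IsLagrangeStationary o α g lm) (r : ι → ℝ) :
    g ⬝ᵥ r = ∑ j, lm.2 j * (r o - α * r j) - lm.1 * ∑ i, r i := by
  have hterm (j : {j : ι // j ≠ o}) :
      g j * r j = lm.2 j * (r o - α * r j) - lm.2 j * r o - lm.1 * r j := by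
    rw [h.2 j]; ring
  simp only [dotProduct]
  rw [Fintype.sum_eq_add_sum_subtype_ne _ o, Fintype.sum_eq_add_sum_subtype_ne r o, h.1,
    Finset.sum_congr rfl fun j _ => hterm j, Finset.sum_sub_distrib, Finset.sum_sub_distrib,
    ← Finset.sum_mul, ← Finset.mul_sum]
  ring

lemma IsLagrangeStationary.dotProduct_tiedPoint {g : ι → ℝ} {lm : ℝ × ({j : ι // j ≠ o} → ℝ)}
    (h : IsLagrangeStationary o α g lm) (hα : 0 < α) : g ⬝ᵥ tiedPoint o α = -lm.1 := by
  have hactive (j : {j : ι // j ≠ o}) : tiedPoint o α o - α * tiedPoint o α j = 0 :=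
    sub_eq_zero.2 (mul_tiedPoint j.2).symm
  simp [h.dotProduct_eq, hactive, sum_tiedPoint hα]

lemma IsLagrangeStationary.eq_multipliers {g : ι → ℝ} {lm : ℝ × ({j : ι // j ≠ o} → ℝ)}
    (h : IsLagrangeStationary o α g lm) (hα : 0 < α) : lm = multipliers o α g := by
  refine Prod.ext ?_ (funext fun j => ?_)
  · simp [multipliers, h.dotProduct_tiedPoint hα]
  · rw [multipliers, h.dotProduct_tiedPoint hα, eq_div_iff hα.ne', h.2 j]
    ring

lemma mul_add_sum_dotProduct_tiedPoint_sub_eq_zero (hα : 0 < α) (g : ι → ℝ) :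
    α * (g ⬝ᵥ tiedPoint o α - g o) +
      ∑ j : {j : ι // j ≠ o}, (g ⬝ᵥ tiedPoint o α - g j) = 0 := by
  have hcentroid :
      g ⬝ᵥ tiedPoint o α * ∑ i, tiedWeight o α i = ∑ i, g i * tiedWeight o α i := by
    simp only [dotProduct, tiedPoint, ← mul_div_assoc]
    rw [← Finset.sum_div, div_mul_cancel₀ _ (sum_tiedWeight_pos hα).ne']
  have hbalance : ∑ i, tiedWeight o α i * (g ⬝ᵥ tiedPoint o α - g i) = 0 := by
    simp only [mul_sub, Finset.sum_sub_distrib, ← Finset.sum_mul]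
    rw [mul_comm, hcentroid, sub_eq_zero]
    exact Finset.sum_congr rfl fun i _ => mul_comm _ _
  have hself : tiedWeight o α o = α := by simp [tiedWeight]
  have hne (j : {j : ι // j ≠ o}) : tiedWeight o α j = 1 := by simp [tiedWeight, j.2]
  simpa only [Fintype.sum_eq_add_sum_subtype_ne _ o, hself, hne, one_mul] using hbalance

lemma isLagrangeStationary_multipliers (hα : 0 < α) (g : ι → ℝ) :
    IsLagrangeStationary o α g (multipliers o α g) := by
  refine ⟨?_, fun j => ?_⟩
  · simp only [multipliers, ← Finset.sum_div]
    rw [eq_neg_of_add_eq_zero_right (mul_add_sum_dotProduct_tiedPoint_sub_eq_zero hα g)]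
    field_simp
    ring
  · simp only [multipliers]
    field_simp
    ring

end Stationarity

section Feasible

variable {N : ℕ} [NeZero N] {α : ℝ} {q : Fin N → ℝ}

lemma convex_C1 : Convex ℝ (C1 N α) := by
  rintro x ⟨hx, hxs, hxα⟩ y ⟨hy, hys, hyα⟩ a b ha hb hab
  refine ⟨fun i => add_nonneg (mul_nonneg ha (hx i)) (mul_nonneg hb (hy i)), ?_, fun k hk => ?_⟩
  · simp [Finset.sum_add_distrib, ← Finset.mul_sum, hxs, hys, hab]
  · simp only [Pi.add_apply, Pi.smul_apply, smul_eq_mul]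
    linarith [mul_le_mul_of_nonneg_left (hxα k hk) ha, mul_le_mul_of_nonneg_left (hyα k hk) hb]

lemma tiedPoint_mem_C1 (hα : 0 < α) : tiedPoint 0 α ∈ C1 N α :=
  ⟨fun i => (tiedPoint_pos hα i).le, sum_tiedPoint hα, fun _ hk => (mul_tiedPoint hk).le⟩

lemma add_smul_tiedPoint_sub_single_mem_C1 (hα : 0 < α) (hq : q ∈ C1 N α) {j : Fin N}
    (hj : j ≠ 0) : q + q j • (tiedPoint 0 α - Pi.single j 1) ∈ C1 N α := by
  obtain ⟨hnonneg, hsum, hdom⟩ := hq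
  have hgain (i : Fin N) : 0 ≤ q j * tiedPoint 0 α i :=
    mul_nonneg (hnonneg j) (tiedPoint_pos hα i).le
  refine ⟨fun i => ?_, ?_, fun k hk => ?_⟩
  · rcases eq_or_ne i j with rfl | hij
    · simpa [mul_sub] using hgain i
    · simpa [hij] using add_nonneg (hnonneg i) (hgain i)
  · simp [Finset.sum_add_distrib, ← Finset.mul_sum, hsum, sum_tiedPoint hα]
  · have hloss : 0 ≤ α * (q j * (Pi.single j 1 : Fin N → ℝ) k) :=
      mul_nonneg hα.le (mul_nonneg (hnonneg j)
        ((Pi.single_nonneg (α := fun _ => ℝ)).2 zero_le_one k))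
    simp only [Pi.add_apply, Pi.smul_apply, Pi.sub_apply, smul_eq_mul, Pi.single_eq_of_ne hj.symm,
      ← mul_tiedPoint (α := α) hk]
    linarith [hdom k hk]

lemma apply_le_dotProduct_tiedPoint {g : Fin N → ℝ} (hα : 0 < α) (hq : q ∈ C1 N α)
    (hmin : ∀ r ∈ C1 N α, g ⬝ᵥ q ≤ g ⬝ᵥ r) {j : Fin N} (hj : j ≠ 0) (hqj : 0 < q j) :
    g j ≤ g ⬝ᵥ tiedPoint 0 α := by
  have hmove := hmin _ (add_smul_tiedPoint_sub_single_mem_C1 hα hq hj)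
  rw [dotProduct_add, dotProduct_smul, dotProduct_sub, dotProduct_single_one, smul_eq_mul,
    le_add_iff_nonneg_right] at hmove
  exact sub_nonneg.1 (nonneg_of_mul_nonneg_right hmove hqj)

lemma IsLagrangeStationary.mul_sub_eq_zero {g : Fin N → ℝ} {lm : ℝ × ({j : Fin N // j ≠ 0} → ℝ)}
    (h : IsLagrangeStationary 0 α g lm) (hα : 0 < α) (hlm : ∀ j, 0 ≤ lm.2 j) (hq : q ∈ C1 N α)
    (hmin : ∀ r ∈ C1 N α, g ⬝ᵥ q ≤ g ⬝ᵥ r) (j : {j : Fin N // j ≠ 0}) :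
    lm.2 j * (α * q j - q 0) = 0 := by
  have hterm (k : {k : Fin N // k ≠ 0}) : 0 ≤ lm.2 k * (q 0 - α * q k) :=
    mul_nonneg (hlm k) (sub_nonneg.2 (hq.2.2 k k.2))
  have hsum : ∑ k, lm.2 k * (q 0 - α * q k) ≤ 0 := by
    have hle := hmin _ (tiedPoint_mem_C1 hα)
    rw [h.dotProduct_tiedPoint hα, h.dotProduct_eq, hq.2.1] at hle
    linarith
  have hzero : ∑ k, lm.2 k * (q 0 - α * q k) = 0 :=
    hsum.antisymm (Finset.sum_nonneg fun k _ => hterm k)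
  rw [← neg_sub (q 0), mul_neg, neg_eq_zero]
  exact (Finset.sum_eq_zero_iff_of_nonneg fun k _ => hterm k).1 hzero j (Finset.mem_univ j)

theorem existsUnique_multipliers_of_forall_dotProduct_le {g : Fin N → ℝ} (hα : 0 < α)
    (hq : q ∈ C1 N α) (hpos : ∀ j ≠ 0, 0 < q j) (hmin : ∀ r ∈ C1 N α, g ⬝ᵥ q ≤ g ⬝ᵥ r) :
    ∃! lm : ℝ × ({j : Fin N // j ≠ 0} → ℝ),
      (∀ j, 0 ≤ lm.2 j) ∧ IsLagrangeStationary 0 α g lm ∧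
      ∀ j : {j : Fin N // j ≠ 0}, lm.2 j * (α * q j - q 0) = 0 := by
  have hstat : IsLagrangeStationary 0 α g (multipliers 0 α g) :=
    isLagrangeStationary_multipliers hα g
  have hnonneg (j) : 0 ≤ (multipliers 0 α g).2 j :=
    div_nonneg (sub_nonneg.2 (apply_le_dotProduct_tiedPoint hα hq hmin j.2 (hpos j j.2))) hα.le
  exact ⟨multipliers 0 α g, ⟨hnonneg, hstat, hstat.mul_sub_eq_zero hα hnonneg hq hmin⟩,
    fun _ h => h.2.1.eq_multipliers hα⟩

end Feasible

section Divergence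

lemma hasDerivAt_mul_log_div {a x : ℝ} (ha : a ≠ 0) (hx : x ≠ 0) :
    HasDerivAt (fun y => y * Real.log (y / a)) (Real.log (x / a) + 1) x := by
  have hlog := ((hasDerivAt_id x).div_const a).log (div_ne_zero hx ha)
  refine ((hasDerivAt_id x).mul hlog).congr_deriv ?_
  simp only [id_eq]
  field_simp

variable {N : ℕ} {p q : Fin N → ℝ}

/-- The gradient of `KLv · p` at a point `q` with nonzero coordinates. -/
noncomputable def gradKLv (q p : Fin N → ℝ) (i : Fin N) : ℝ :=
  Real.log (q i / p i) + 1

lemma hasFDerivAt_KLv (hp : ∀ i, p i ≠ 0) (hq : ∀ i, q i ≠ 0) :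
    HasFDerivAt (KLv · p)
      (∑ i, gradKLv q p i • (ContinuousLinearMap.proj i : (Fin N → ℝ) →L[ℝ] ℝ)) q :=
  HasFDerivAt.fun_sum fun i _ =>
    (hasDerivAt_mul_log_div (hp i) (hq i)).comp_hasFDerivAt (f := fun r : Fin N → ℝ => r i) q
      (hasFDerivAt_apply i q)

lemma dotProduct_gradKLv_le_of_isLocalMinOn {s : Set (Fin N → ℝ)} (hs : Convex ℝ s)
    (hp : ∀ i, p i ≠ 0) (hq : ∀ i, q i ≠ 0) (hqs : q ∈ s) (hmin : IsLocalMinOn (KLv · p) s q)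
    {r : Fin N → ℝ} (hr : r ∈ s) : gradKLv q p ⬝ᵥ q ≤ gradKLv q p ⬝ᵥ r := by
  have hderiv := hmin.hasFDerivWithinAt_nonneg (hasFDerivAt_KLv hp hq).hasFDerivWithinAt
    (sub_mem_posTangentConeAt_of_segment_subset (hs.segment_subset hqs hr))
  simpa [dotProduct, mul_sub] using hderiv

lemma eq_mul_exp_sub_one_sub_iff {a b x l : ℝ} (ha : 0 < a) (hb : 0 < b) :
    a = b * Real.exp (x - 1 - l) ↔ Real.log (a / b) + 1 = x - l := by
  rw [mul_comm, ← div_eq_iff hb.ne', ← Real.exp_log (div_pos ha hb), Real.exp_eq_exp,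
    Real.log_exp, sub_right_comm, eq_sub_iff_add_eq]

lemma isLagrangeStationary_gradKLv_iff [NeZero N] {α : ℝ} (hp : ∀ i, 0 < p i) (hq : ∀ i, 0 < q i)
    {lm : ℝ × ({j : Fin N // j ≠ 0} → ℝ)} :
    IsLagrangeStationary 0 α (gradKLv q p) lm ↔
      q 0 = p 0 * Real.exp ((∑ k, lm.2 k) - 1 - lm.1) ∧
      ∀ j : {j : Fin N // j ≠ 0}, q j = p j * Real.exp (-(α * lm.2 j) - 1 - lm.1) := by
  simp only [IsLagrangeStationary, gradKLv, eq_mul_exp_sub_one_sub_iff (hq _) (hp _)]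

end Divergence

theorem statement5_general {N : ℕ} [NeZero N] {α : ℝ} (hα : 0 < α) {p q : Fin N → ℝ}
    (hp : ∀ i, 0 < p i) (hqC : q ∈ C1 N α) (hqmin : IsLocalMinOn (KLv · p) (C1 N α) q)
    (hqpos : ∀ i, 0 < q i) :
    ∃! lm : ℝ × ({j : Fin N // j ≠ 0} → ℝ),
      (∀ j, 0 ≤ lm.2 j) ∧
      q 0 = p 0 * Real.exp ((∑ k, lm.2 k) - 1 - lm.1) ∧
      (∀ j : {j : Fin N // j ≠ 0}, q j = p j * Real.exp (-(α * lm.2 j) - 1 - lm.1)) ∧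
      (∀ j : {j : Fin N // j ≠ 0}, lm.2 j * (α * q j - q 0) = 0) := by
  have hgrad : ∀ r ∈ C1 N α, gradKLv q p ⬝ᵥ q ≤ gradKLv q p ⬝ᵥ r := fun r hr =>
    dotProduct_gradKLv_le_of_isLocalMinOn convex_C1 (fun i => (hp i).ne')
      (fun i => (hqpos i).ne') hqC hqmin hr
  simpa only [isLagrangeStationary_gradKLv_iff hp hqpos, and_assoc] using
    existsUnique_multipliers_of_forall_dotProduct_le hα hqC (fun j _ => hqpos j) hgrad

/-- Existence and uniqueness of the KKT multipliers `λ` and `μ_j` (`j ≠ 0`) for the unique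
minimizer `q*` of (P): the stationarity and complementary slackness conditions determine
them uniquely, with `μ_j ≥ 0`. -/
theorem statement5 (N : ℕ) [NeZero N] (hN : 2 ≤ N) (α : ℝ) (hα : 1 ≤ α)
    (p : Fin N → ℝ) (hp : ∀ i, 0 < p i) (hps : ∑ i, p i = 1)
    (q : Fin N → ℝ) (hqC : q ∈ C1 N α)
    (hqmin : ∀ r ∈ C1 N α, KLv q p ≤ KLv r p)
    (hquniq : ∀ r, r ∈ C1 N α → (∀ s ∈ C1 N α, KLv r p ≤ KLv s p) → r = q)
    (hqpos : ∀ i, 0 < q i) :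
    ∃! lm : ℝ × ({j : Fin N // j ≠ 0} → ℝ),
      (∀ j, 0 ≤ lm.2 j) ∧
      q 0 = p 0 * Real.exp ((∑ k, lm.2 k) - 1 - lm.1) ∧
      (∀ j : {j : Fin N // j ≠ 0}, q j = p j * Real.exp (-(α * lm.2 j) - 1 - lm.1)) ∧
      (∀ j : {j : Fin N // j ≠ 0}, lm.2 j * (α * q j - q 0) = 0) := by
  exact statement5_general (zero_lt_one.trans_le hα) hp hqC (IsMinOn.localize hqmin) hqpos
end

section
/- The KKT multiplier λ of (P) satisfies exp(1 + λ) = (1 + |A|/α)·g(A) + ∑_{j ∉ A ∪ {1}} p_j, and the minimum value of (P) equals KL(q*‖p) = −(1 + λ) = −log( (1 + |A|/α)·g(A) + ∑_{j ∉ A ∪ {1}} p_j ). In particular, (1 + |A|/α)·g(A) + ∑_{j ∉ A ∪ {1}} p_j ≤ 1. -/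
/-- `g(S) = (p 0 ^ α * ∏_{j ∈ S} α * p j) ^ (1 / (|S| + α))`. -/
noncomputable def gfun {N : ℕ} [NeZero N] (α : ℝ) (p : Fin N → ℝ) (S : Finset (Fin N)) : ℝ :=
  (p 0 ^ α * ∏ j ∈ S, α * p j) ^ ((1 : ℝ) / ((S.card : ℝ) + α))

/-!
Write `o` for the distinguished index and `A` for the active set. Multiplying the stationarity
equations by `exp (1 + λ)` removes `λ` from them. Complementary slackness then says that
`x = q o * exp (1 + λ)` equals `p o * exp (∑ k ∈ A, μ k)` and also `α * p j * exp (-(α * μ j))`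
for every `j ∈ A`; in `x ^ α * ∏ j ∈ A, x` the exponentials cancel, so `x = g A`. Summing
`q i * exp (1 + λ)` over all `i`, where inactive indices contribute `p i` and active ones `x / α`,
gives the formula for `exp (1 + λ)`. In the relative entropy the terms containing multipliers
cancel by complementary slackness, which leaves `-(1 + λ)`, and Gibbs' inequality makes this
nonnegative.
-/

section

open Finset Real

variable {ι : Type*} {o : ι} {α l : ℝ} {p q μ : ι → ℝ}

theorem sum_sub_sum_le_sum_mul_log_div {s : Finset ι}
    (hp : ∀ i ∈ s, 0 < p i) (hq : ∀ i ∈ s, 0 ≤ q i) :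
    ∑ i ∈ s, q i - ∑ i ∈ s, p i ≤ ∑ i ∈ s, q i * log (q i / p i) := by
  rw [← sum_sub_distrib]
  refine sum_le_sum fun i hi ↦ ?_
  have hklFun : 0 ≤ p i * InformationTheory.klFun (q i / p i) :=
    mul_nonneg (hp i hi).le (InformationTheory.klFun_nonneg (div_nonneg (hq i hi) (hp i hi).le))
  have hexpand : p i * InformationTheory.klFun (q i / p i)
      = q i * log (q i / p i) + p i - q i := by
    have := (hp i hi).ne'
    rw [InformationTheory.klFun_apply]
    field_simp
  linarith

/-- The index-type-independent form of `gfun`, with the distinguished index `o` in place of `0`. -/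
noncomputable def pivotGeomMean (o : ι) (α : ℝ) (p : ι → ℝ) (S : Finset ι) : ℝ :=
  (p o ^ α * ∏ j ∈ S, α * p j) ^ ((1 : ℝ) / ((#S : ℝ) + α))

theorem pivotGeomMean_eq_of_exp_balance {x : ℝ} {S : Finset ι}
    (hα : 0 < α) (hpo : 0 < p o)
    (hpivot : x = p o * exp (∑ j ∈ S, μ j)) (hmem : ∀ j ∈ S, x = α * p j * exp (-(α * μ j))) :
    pivotGeomMean o α p S = x := by
  have hx : 0 < x := hpivot ▸ mul_pos hpo (exp_pos _)
  have hrpow : x ^ α = p o ^ α * exp (α * ∑ j ∈ S, μ j) := by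
    rw [hpivot, mul_rpow hpo.le (exp_pos _).le, ← exp_mul, mul_comm α]
  have hpow : x ^ #S = (∏ j ∈ S, α * p j) * exp (-(α * ∑ j ∈ S, μ j)) := by
    rw [← prod_const, prod_congr rfl hmem, prod_mul_distrib, ← exp_sum, sum_neg_distrib, mul_sum]
  have hbase : p o ^ α * ∏ j ∈ S, α * p j = x ^ ((#S : ℝ) + α) := by
    rw [rpow_add hx, rpow_natCast, hrpow, hpow, exp_neg]
    field_simp
  rw [pivotGeomMean, hbase, one_div, rpow_rpow_inv hx.le (by positivity)]

variable [Fintype ι] [DecidableEq ι]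

/-- The closed form of `exp (1 + λ)`, the normalizing constant of the minimizer, as a function of
the set `S` of active constraints. -/
noncomputable def pivotNormalizer (o : ι) (α : ℝ) (p : ι → ℝ) (S : Finset ι) : ℝ :=
  (1 + (#S : ℝ) / α) * pivotGeomMean o α p S + ∑ j ∈ univ.erase o \ S, p j

/-- The indices of the constraints `α * q j ≤ q o` whose multiplier is positive. The value `μ o`
is meaningless, so `o` is excluded. -/
noncomputable def activeSet (o : ι) (μ : ι → ℝ) : Finset ι :=
  univ.filter fun j ↦ j ≠ o ∧ 0 < μ j

/-- `l` and `μ` satisfy the Karush–Kuhn–Tucker conditions at `q` for minimizing the relative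
entropy to `p`, where `l` belongs to the constraint `∑ i, q i = 1` and `μ j` to
`α * q j ≤ q o`. Feasibility of `q` is not included. -/
structure IsKKTMultiplier (o : ι) (α : ℝ) (p q : ι → ℝ) (l : ℝ) (μ : ι → ℝ) : Prop where
  nonneg : ∀ j, j ≠ o → 0 ≤ μ j
  stationary_pivot : q o = p o * exp ((∑ k ∈ univ.erase o, μ k) - 1 - l)
  stationary_of_ne : ∀ j, j ≠ o → q j = p j * exp (-(α * μ j) - 1 - l)
  slackness : ∀ j, j ≠ o → μ j * (α * q j - q o) = 0

theorem activeSet_subset_erase : activeSet o μ ⊆ univ.erase o :=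
  fun j hj ↦ mem_erase.mpr ⟨(mem_filter.mp hj).2.1, mem_univ j⟩

namespace IsKKTMultiplier

theorem pos (h : IsKKTMultiplier o α p q l μ) (hp : ∀ i, 0 < p i) (i : ι) : 0 < q i := by
  obtain rfl | hi := eq_or_ne i o
  · exact h.stationary_pivot ▸ mul_pos (hp i) (exp_pos _)
  · exact h.stationary_of_ne i hi ▸ mul_pos (hp i) (exp_pos _)

theorem pivot_mul_exp (h : IsKKTMultiplier o α p q l μ) :
    q o * exp (1 + l) = p o * exp (∑ j ∈ univ.erase o, μ j) := by
  rw [h.stationary_pivot, mul_assoc, ← exp_add]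
  ring_nf

theorem mul_exp_of_ne (h : IsKKTMultiplier o α p q l μ) {j : ι} (hj : j ≠ o) :
    q j * exp (1 + l) = p j * exp (-(α * μ j)) := by
  rw [h.stationary_of_ne j hj, mul_assoc, ← exp_add]
  ring_nf

theorem eq_zero_of_notMem_activeSet (h : IsKKTMultiplier o α p q l μ) {j : ι} (hj : j ≠ o)
    (hjA : j ∉ activeSet o μ) : μ j = 0 :=
  le_antisymm (not_lt.mp fun hμ ↦ hjA (mem_filter.mpr ⟨mem_univ j, hj, hμ⟩)) (h.nonneg j hj)

theorem tight_of_mem_activeSet (h : IsKKTMultiplier o α p q l μ) {j : ι}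
    (hjA : j ∈ activeSet o μ) : α * q j = q o := by
  obtain ⟨hj, hμ⟩ := (mem_filter.mp hjA).2
  exact sub_eq_zero.mp ((mul_eq_zero.mp (h.slackness j hj)).resolve_left hμ.ne')

theorem pivotGeomMean_activeSet (h : IsKKTMultiplier o α p q l μ) (hα : 0 < α) (hpo : 0 < p o) :
    pivotGeomMean o α p (activeSet o μ) = q o * exp (1 + l) := by
  have hsum : ∑ j ∈ activeSet o μ, μ j = ∑ j ∈ univ.erase o, μ j :=
    sum_subset activeSet_subset_erase fun j hj hjA ↦
      h.eq_zero_of_notMem_activeSet (ne_of_mem_erase hj) hjA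
  refine pivotGeomMean_eq_of_exp_balance hα hpo (hsum ▸ h.pivot_mul_exp) fun j hjA ↦ ?_
  have hj : j ≠ o := (mem_filter.mp hjA).2.1
  rw [← h.tight_of_mem_activeSet hjA, mul_assoc, h.mul_exp_of_ne hj, mul_assoc]

theorem exp_one_add_eq_pivotNormalizer (h : IsKKTMultiplier o α p q l μ) (hα : 0 < α)
    (hpo : 0 < p o) (hq : ∑ i, q i = 1) :
    exp (1 + l) = pivotNormalizer o α p (activeSet o μ) := by
  set A := activeSet o μ
  have hactive : ∑ j ∈ A, q j = #A * (q o / α) := by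
    rw [← nsmul_eq_mul, ← sum_const]
    exact sum_congr rfl fun j hjA ↦
      eq_div_of_mul_eq hα.ne' (mul_comm α (q j) ▸ h.tight_of_mem_activeSet hjA)
  have hinactive : (∑ j ∈ univ.erase o \ A, q j) * exp (1 + l) = ∑ j ∈ univ.erase o \ A, p j := by
    rw [sum_mul]
    refine sum_congr rfl fun j hj ↦ ?_
    obtain ⟨hjo, hjA⟩ := mem_sdiff.mp hj
    have hj : j ≠ o := ne_of_mem_erase hjo
    rw [h.mul_exp_of_ne hj, h.eq_zero_of_notMem_activeSet hj hjA, mul_zero, neg_zero, exp_zero,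
      mul_one]
  calc exp (1 + l)
      = (q o + (∑ j ∈ univ.erase o \ A, q j + ∑ j ∈ A, q j)) * exp (1 + l) := by
        rw [sum_sdiff activeSet_subset_erase, add_sum_erase _ _ (mem_univ o), hq, one_mul]
    _ = (1 + #A / α) * (q o * exp (1 + l)) + (∑ j ∈ univ.erase o \ A, q j) * exp (1 + l) := by
        rw [hactive]
        ring
    _ = pivotNormalizer o α p A := by
        rw [hinactive, ← h.pivotGeomMean_activeSet hα hpo, pivotNormalizer]

theorem sum_mul_log_div_eq (h : IsKKTMultiplier o α p q l μ) (hp : ∀ i, 0 < p i)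
    (hq : ∑ i, q i = 1) : ∑ i, q i * log (q i / p i) = -(1 + l) := by
  have hpivot : q o * log (q o / p o) = q o * ∑ j ∈ univ.erase o, μ j - q o * (1 + l) := by
    rw [h.stationary_pivot, mul_div_cancel_left₀ _ (hp o).ne', log_exp]
    ring
  have hother : ∀ j ∈ univ.erase o, q j * log (q j / p j) = -(q o * μ j) - q j * (1 + l) := by
    intro j hj
    have hlog : log (q j / p j) = -(α * μ j) - 1 - l := by
      rw [h.stationary_of_ne j (ne_of_mem_erase hj), mul_div_cancel_left₀ _ (hp j).ne', log_exp]
    rw [hlog]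
    linear_combination -h.slackness j (ne_of_mem_erase hj)
  calc ∑ i, q i * log (q i / p i)
      = q o * ∑ j ∈ univ.erase o, μ j - q o * (1 + l)
          + ∑ j ∈ univ.erase o, (-(q o * μ j) - q j * (1 + l)) := by
        rw [← add_sum_erase _ _ (mem_univ o), hpivot, sum_congr rfl hother]
    _ = -((q o + ∑ j ∈ univ.erase o, q j) * (1 + l)) := by
        rw [sum_sub_distrib, sum_neg_distrib, ← mul_sum, ← sum_mul]
        ring
    _ = -(1 + l) := by
        rw [add_sum_erase _ _ (mem_univ o), hq, one_mul]

end IsKKTMultiplier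

theorem statement8_general (hα : 0 < α) (hp : ∀ i, 0 < p i) (hps : ∑ i, p i = 1)
    (hqs : ∑ i, q i = 1) (h : IsKKTMultiplier o α p q l μ) :
    exp (1 + l) = pivotNormalizer o α p (activeSet o μ) ∧
    ∑ i, q i * log (q i / p i) = -(1 + l) ∧
    ∑ i, q i * log (q i / p i) = -log (pivotNormalizer o α p (activeSet o μ)) ∧
    pivotNormalizer o α p (activeSet o μ) ≤ 1 := by
  have hexp := h.exp_one_add_eq_pivotNormalizer hα (hp o) hqs
  have hval := h.sum_mul_log_div_eq hp hqs
  have hgibbs : ∑ i, q i - ∑ i, p i ≤ ∑ i, q i * log (q i / p i) :=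
    sum_sub_sum_le_sum_mul_log_div (fun i _ ↦ hp i) fun i _ ↦ (h.pos hp i).le
  refine ⟨hexp, hval, ?_, ?_⟩
  · rw [← hexp, log_exp, hval]
  · rw [← hexp, exp_le_one_iff]
    linarith

end

/-- Value of the multiplier `λ` and of the minimum:
`exp (1 + λ) = (1 + |A|/α) * g A + ∑_{j ∉ A ∪ {0}} p j`, the minimum value of (P) is
`KL(q*‖p) = -(1+λ) = -log ((1 + |A|/α) * g A + ∑_{j ∉ A ∪ {0}} p j)`, and in particular
this quantity is at most `1`. -/
theorem statement8 (N : ℕ) [NeZero N] (hN : 2 ≤ N) (α : ℝ) (hα : 1 ≤ α)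
    (p : Fin N → ℝ) (hp : ∀ i, 0 < p i) (hps : ∑ i, p i = 1)
    (q : Fin N → ℝ) (hqC : q ∈ C1 N α)
    (hqmin : ∀ r ∈ C1 N α, KLv q p ≤ KLv r p)
    (hquniq : ∀ r, r ∈ C1 N α → (∀ s ∈ C1 N α, KLv r p ≤ KLv s p) → r = q)
    (hqpos : ∀ i, 0 < q i)
    (l : ℝ) (μ : Fin N → ℝ) (hμnn : ∀ j, j ≠ 0 → 0 ≤ μ j)
    (hstat0 : q 0 = p 0 * Real.exp ((∑ k ∈ Finset.univ.erase 0, μ k) - 1 - l))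
    (hstatj : ∀ j, j ≠ 0 → q j = p j * Real.exp (-(α * μ j) - 1 - l))
    (hslack : ∀ j, j ≠ 0 → μ j * (α * q j - q 0) = 0)
    (A : Finset (Fin N)) (hA : A = Finset.univ.filter (fun j : Fin N => j ≠ 0 ∧ 0 < μ j)) :
    Real.exp (1 + l) =
      (1 + (A.card : ℝ) / α) * gfun α p A + ∑ j ∈ Finset.univ.erase 0 \ A, p j ∧
    KLv q p = -(1 + l) ∧
    KLv q p =
      -Real.log ((1 + (A.card : ℝ) / α) * gfun α p A + ∑ j ∈ Finset.univ.erase 0 \ A, p j) ∧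
    (1 + (A.card : ℝ) / α) * gfun α p A + ∑ j ∈ Finset.univ.erase 0 \ A, p j ≤ 1 := by
  subst hA
  exact statement8_general (zero_lt_one.trans_le hα) hp hps hqC.2.1 ⟨hμnn, hstat0, hstatj, hslack⟩
end
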